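/- For every simplicial complex X on a finite vertex set V, β(X) equals the maximum cardinality of a minimal free face of X, where a free face is minimal if none of its proper subsets is a free face of X. -/

import Mathlib

open scoped Classical

/-- `F` is a facet (inclusion-maximal face) of the complex `X`. -/
def IsFacet {V : Type*} (X : Set (Finset V)) (F : Finset V) : Prop :=
  F ∈ X ∧ ∀ G ∈ X, F ⊆ G → G = F

/-- `A` is a free face of `X`: a face contained in exactly one facet. -/
def IsFreeFace {V : Type*} (X : Set (Finset V)) (A : Finset V) : Prop :=
  A ∈ X ∧ ∃! F : Finset V, IsFacet X F ∧ A ⊆ F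

/-- The link of a face `A` in `X`. -/
def link {V : Type*} [DecidableEq V] (X : Set (Finset V)) (A : Finset V) :
    Set (Finset V) :=
  {T : Finset V | T ∈ X ∧ A ∩ T = ∅ ∧ T ∪ A ∈ X}

/-- A family `Y` of finite sets is a simplex if the union of all its members
is itself a member. -/
def IsSimplex {V : Type*} [Fintype V] (Y : Set (Finset V)) : Prop :=
  Finset.univ.filter (fun v => ∃ T ∈ Y, v ∈ T) ∈ Y

/-- `β(X)`: the maximum cardinality of a face `A` which is minimal (under
inclusion) with the property that `lk(X;A)` is a simplex. -/
noncomputable def betaNumber {V : Type*} [Fintype V] [DecidableEq V]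
    (X : Set (Finset V)) : ℕ :=
  sSup {n : ℕ | ∃ A : Finset V,
    (A ∈ X ∧ IsSimplex (link X A) ∧ ∀ B ⊂ A, ¬ IsSimplex (link X B)) ∧ A.card = n}

/-!
For a finite down-closed family `X`, `T ↦ T ∪ A` and `G ↦ G \ A` are mutually inverse
monotone maps between the link of `A` and the faces containing `A`. One of these posets therefore
has a greatest element exactly when the other does: for the link this says that it is a simplex,
for the faces containing `A` that `A` is free. Hence the two minimality conditions select the same
sets `A`.
-/

section

variable {V : Type*} {X : Set (Finset V)} {A F : Finset V}

theorem isFacet_iff_maximal : IsFacet X F ↔ Maximal (· ∈ X) F :=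
  and_congr_right fun _ => forall₃_congr fun _ _ hFG => hFG.ge_iff_eq'.symm

theorem exists_isFacet_superset (hX : X.Finite) (hA : A ∈ X) : ∃ F, IsFacet X F ∧ A ⊆ F := by
  obtain ⟨F, hAF, hF⟩ := hX.exists_le_maximal hA
  exact ⟨F, isFacet_iff_maximal.2 hF, hAF⟩

theorem isFreeFace_iff_exists_isGreatest (hfin : X.Finite) (hX : IsLowerSet X) :
    IsFreeFace X A ↔ ∃ F, IsGreatest (X ∩ Set.Ici A) F := by
  constructor
  · rintro ⟨-, F, ⟨hF, hAF⟩, hF_unique⟩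
    refine ⟨F, ⟨hF.1, hAF⟩, fun G ⟨hG, hAG⟩ => ?_⟩
    obtain ⟨F', hF', hGF'⟩ := exists_isFacet_superset hfin hG
    exact hF_unique F' ⟨hF', hAG.trans hGF'⟩ ▸ hGF'
  · rintro ⟨F, ⟨hF, hAF⟩, hF_upper⟩
    refine ⟨hX hAF hF, F, ⟨⟨hF, fun G hG hFG => ?_⟩, hAF⟩, fun G ⟨hG, hAG⟩ => ?_⟩
    · exact (hF_upper ⟨hG, hAF.trans hFG⟩).antisymm hFG
    · exact (hG.2 F hF (hF_upper ⟨hG.1, hAG⟩)).symm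

theorem isSimplex_iff_exists_isGreatest [Fintype V] {Y : Set (Finset V)} :
    IsSimplex Y ↔ ∃ T, IsGreatest Y T := by
  constructor
  · refine fun hY => ⟨_, hY, fun T hT v hv => ?_⟩
    exact Finset.mem_filter.2 ⟨Finset.mem_univ v, T, hT, hv⟩
  · rintro ⟨T, hT, hT_upper⟩
    have union_eq : Finset.univ.filter (fun v => ∃ S ∈ Y, v ∈ S) = T := by
      ext v
      simpa using ⟨fun ⟨S, hS, hv⟩ => hT_upper hS hv, fun hv => ⟨T, hT, hv⟩⟩
    rwa [IsSimplex, union_eq]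

variable [DecidableEq V]

theorem sdiff_mem_link (hX : IsLowerSet X) {G : Finset V} (hG : G ∈ X) (hAG : A ⊆ G) :
    G \ A ∈ link X A :=
  ⟨hX Finset.sdiff_subset hG, Finset.inter_sdiff_self A G,
    (Finset.sdiff_union_of_subset hAG).symm ▸ hG⟩

theorem image_union_link (hX : IsLowerSet X) : (· ∪ A) '' link X A = X ∩ Set.Ici A := by
  ext G
  constructor
  · rintro ⟨T, hT, rfl⟩
    exact ⟨hT.2.2, Finset.subset_union_right⟩
  · rintro ⟨hG, hAG⟩
    exact ⟨G \ A, sdiff_mem_link hX hG hAG, Finset.sdiff_union_of_subset hAG⟩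

theorem image_sdiff_inter_Ici (hX : IsLowerSet X) : (· \ A) '' (X ∩ Set.Ici A) = link X A := by
  ext T
  constructor
  · rintro ⟨G, ⟨hG, hAG⟩, rfl⟩
    exact sdiff_mem_link hX hG hAG
  · rintro ⟨-, hAT, hTA⟩
    have hdisj : Disjoint T A := (Finset.disjoint_iff_inter_eq_empty.2 hAT).symm
    exact ⟨T ∪ A, ⟨hTA, Finset.subset_union_right⟩, Finset.union_sdiff_cancel_right hdisj⟩

theorem exists_isGreatest_link_iff (hX : IsLowerSet X) :
    (∃ T, IsGreatest (link X A) T) ↔ ∃ F, IsGreatest (X ∩ Set.Ici A) F := by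
  have union_mono : Monotone (· ∪ A) := fun _ _ h => Finset.union_subset_union_left h
  have sdiff_mono : Monotone (· \ A) := fun _ _ h => Finset.sdiff_subset_sdiff h subset_rfl
  constructor
  · rintro ⟨T, hT⟩
    exact ⟨T ∪ A, image_union_link hX ▸ union_mono.map_isGreatest hT⟩
  · rintro ⟨F, hF⟩
    exact ⟨F \ A, image_sdiff_inter_Ici hX ▸ sdiff_mono.map_isGreatest hF⟩

theorem isSimplex_link_iff_isFreeFace [Fintype V] (hX : IsLowerSet X) :
    IsSimplex (link X A) ↔ IsFreeFace X A := by
  rw [isSimplex_iff_exists_isGreatest, exists_isGreatest_link_iff hX,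
    isFreeFace_iff_exists_isGreatest X.toFinite hX]

end

/-- For every simplicial complex `X` on a finite vertex set `V`,
`β(X)` equals the maximum cardinality of a minimal free face of `X` (a free
face none of whose proper subsets is a free face). -/
theorem betaNumber_eq_max_minimal_free_face {V : Type*} [Fintype V] [DecidableEq V]
    (X : Set (Finset V))
    (hdown : ∀ s ∈ X, ∀ t ⊆ s, t ∈ X)
    (hvert : ∀ x : V, ({x} : Finset V) ∈ X) :
    betaNumber X =
      sSup {n : ℕ | ∃ A : Finset V,
        (IsFreeFace X A ∧ ∀ B ⊂ A, ¬ IsFreeFace X B) ∧ A.card = n} := by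
  have hX : IsLowerSet X := fun s t hts hs => hdown s hs t hts
  have mem_and_isFreeFace (A : Finset V) : A ∈ X ∧ IsFreeFace X A ↔ IsFreeFace X A :=
    and_iff_right_of_imp And.left
  simp only [betaNumber, isSimplex_link_iff_isFreeFace hX, ← and_assoc, mem_and_isFreeFace]
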